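/- Under the hypotheses of the equidistribution lemma — K a compact metric space, F : K → K continuous, d ≥ 2, R_n the (finite) sets of repelling periodic points of period dividing n with limsup Card(R_n)/dⁿ ≤ 1, ν an F-invariant, mixing, constant-Jacobian-d Borel probability measure, L an F-invariant Borel set of full ν-measure on which F is a degree-d covering, and ν̂ an F̂-invariant mixing probability on the space of histories L̂ projecting to ν under every coordinate projection, such that properties (P1) (existence on each ball B(x₀, η(x̂)) of inverse branches G_{x̂,n} of Fⁿ sending x₀ to x_{-n} with Lipschitz constant at most l(x̂)e^{-nΛ}) and (P2) (eventual pairwise disjointness of the sets G_{x̂,n}(C) over histories x̂ with zeroth coordinate x₀ and η(x̂) > 1/N, for any closed C ⊆ B(x₀, 1/N)) hold — define, for N ∈ ℕ, L̂_N := { x̂ ∈ L̂ : η(x̂) > 1/N and l(x̂) ≤ N } and ν_N := (π₀)_*(1_{L̂_N} ν̂). Then for every â ∈ L̂_N with zeroth coordinate a₀ and every closed set C ⊆ B(a₀, 1/(2N)), every weak-* limit σ̃ of the sequence of measures σ_n := d^{-n} Σ_{p ∈ R_n} δ_p satisfies σ̃(C) ≥ ν_N(C). -/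

import Mathlib

open MeasureTheory Filter Metric Set Topology
open scoped NNReal ENNReal

/-- A repelling periodic point of `F` of period dividing `n`: `F^[n] x = x` and there is a
strictly contracting inverse branch `H` of `F^[n]` on a ball around `x` fixing `x`. -/
def IsRepellingPeriodicPt {K : Type*} [MetricSpace K] (F : K → K) (n : ℕ) (x : K) : Prop :=
  F^[n] x = x ∧
    ∃ r : ℝ, 0 < r ∧ ∃ c : ℝ≥0, c < 1 ∧ ∃ H : K → K,
      (∀ y ∈ ball x r, F^[n] (H y) = y) ∧ H x = x ∧ LipschitzOnWith c H (ball x r)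

/-- The space of histories of `F : L → L`: sequences `x̂ = (x₀, x₋₁, x₋₂, …)` of points of
`L` (with `x̂ j = x₋ⱼ`) such that `F x₋ⱼ₋₁ = x₋ⱼ` for all `j`. -/
def histories {K : Type*} (F : K → K) (L : Set K) : Set (ℕ → K) :=
  {x | (∀ j, x j ∈ L) ∧ ∀ j, F (x (j + 1)) = x j}

/-- The shift map `F̂ (x₀, x₋₁, …) := (F x₀, x₀, x₋₁, …)` on histories. -/
def histShift {K : Type*} (F : K → K) (x : ℕ → K) : ℕ → K :=
  fun j => match j with
  | 0 => F (x 0)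
  | j + 1 => x j

/-- Iterated constant Jacobian. -/
lemma jac_iterate {K : Type*} [MetricSpace K] [CompactSpace K] [MeasurableSpace K] [BorelSpace K]
    (F : K → K) (hFcont : Continuous F) (d : ℕ) (ν : Measure K)
    (hjac : ∀ A : Set K, MeasurableSet A → Set.InjOn F A → MeasurableSet (F '' A) →
      (d : ℝ≥0∞) * ν A = ν (F '' A)) (n : ℕ) :
    ∀ A : Set K, MeasurableSet A → Set.InjOn F^[n] A →
      (d : ℝ≥0∞) ^ n * ν A = ν (F^[n] '' A) := by
  induction n with
  | zero => intro A _ _; simp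
  | succ n ih =>
    intro A hA hinj
    rw [Function.iterate_succ] at hinj ⊢
    have h1 : Set.InjOn F A := fun x hx y hy hxy => hinj hx hy (by simp [hxy])
    have h2 : MeasurableSet (F '' A) := hA.image_of_continuousOn_injOn hFcont.continuousOn h1
    have h3 : Set.InjOn F^[n] (F '' A) := by
      rintro _ ⟨x, hx, rfl⟩ _ ⟨y, hy, rfl⟩ hxy
      rw [hinj hx hy hxy]
    rw [Set.image_comp, ← ih _ h2 h3, ← hjac A hA h1 h2, pow_succ, mul_assoc]

lemma fibre_bound {K : Type*} (F : K → K) (d : ℕ) (hd : 2 ≤ d) (L : Set K)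
    (hLinv : F '' L = L) (hLdeg : ∀ y ∈ L, Set.ncard {x ∈ L | F x = y} = d) (n : ℕ) :
    ∀ y ∈ L, {x ∈ L | F^[n] x = y}.Finite ∧ Set.ncard {x ∈ L | F^[n] x = y} ≤ d ^ n := by
  classical
  induction n with
  | zero =>
    intro y hy
    have : {x ∈ L | F^[0] x = y} ⊆ {y} := fun x hx => hx.2
    refine ⟨(Set.finite_singleton y).subset this, ?_⟩
    simpa using Set.ncard_le_ncard this (Set.finite_singleton y)
  | succ n ih =>
    intro y hy
    obtain ⟨hf, hc⟩ := ih y hy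
    have hfin : ∀ z ∈ L, {x ∈ L | F x = z}.Finite := fun z hz =>
      Set.finite_of_ncard_ne_zero (by rw [hLdeg z hz]; omega)
    let g : K → Finset K := fun z => if hz : z ∈ L then (hfin z hz).toFinset else ∅
    have hg : ∀ z ∈ L, (g z).card = d := by
      intro z hz
      simp only [g, hz, dif_pos]
      rw [← Set.ncard_eq_toFinset_card _ (hfin z hz), hLdeg z hz]
    have hsub : {x ∈ L | F^[n + 1] x = y} ⊆ ((hf.toFinset.biUnion g : Finset K) : Set K) := by
      rintro x ⟨hx, hxy⟩
      have hFx : F x ∈ L := by rw [← hLinv]; exact ⟨x, hx, rfl⟩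
      rw [Finset.mem_coe, Finset.mem_biUnion]
      refine ⟨F x, ?_, ?_⟩
      · rw [Set.Finite.mem_toFinset]; exact ⟨hFx, hxy⟩
      · simp only [g, hFx, dif_pos, Set.Finite.mem_toFinset]; exact ⟨hx, rfl⟩
    refine ⟨(Finset.finite_toSet _).subset hsub, ?_⟩
    refine (Set.ncard_le_ncard hsub (Finset.finite_toSet _)).trans ?_
    rw [Set.ncard_coe_finset]
    refine (Finset.card_biUnion_le_card_mul _ g d ?_).trans ?_
    · intro a ha
      rw [Set.Finite.mem_toFinset] at ha
      exact (hg a ha.1).le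
    · rw [← Set.ncard_eq_toFinset_card _ hf, pow_succ]
      exact Nat.mul_le_mul_right d hc

/-- A compact set with finite fibres is a countable disjoint union of Borel sets on which the map
is injective. -/
lemma exists_inj_pieces {K : Type*} [MetricSpace K] [CompactSpace K] [MeasurableSpace K]
    [BorelSpace K] (f : K → K) (hf : Continuous f) (A : Set K) (hA : IsCompact A)
    (hfin : ∀ y ∈ A, {x ∈ A | f x = f y}.Finite) :
    ∃ E : ℕ → Set K, (∀ i, MeasurableSet (E i)) ∧ Pairwise (Function.onFun Disjoint E) ∧
      (⋃ i, E i) = A ∧ ∀ i, Set.InjOn f (E i) := by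
  rcases isEmpty_or_nonempty K with hK | hK
  · exact ⟨fun _ => ∅, fun _ => MeasurableSet.empty, fun i j _ => by simp [Function.onFun],
      by ext x; exact hK.elim x, fun i => by simp⟩
  let W : ℕ → ℕ → Set K := fun i k => A ∩ closedBall (TopologicalSpace.denseSeq K i) (1 / ((k : ℝ) + 1))
  have hW : ∀ i k, IsCompact (W i k) := fun i k => hA.inter_right isClosed_closedBall
  let Z : ℕ → ℕ → ℕ → Set (K × K) := fun i k m =>
    (W i k ×ˢ W i k) ∩ {q | f q.1 = f q.2 ∧ 1 / ((m : ℝ) + 1) ≤ dist q.1 q.2}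
  have hZ : ∀ i k m, IsCompact (Z i k m) := by
    intro i k m
    refine ((hW i k).prod (hW i k)).inter_right (IsClosed.inter ?_ ?_)
    · exact isClosed_eq (hf.comp continuous_fst) (hf.comp continuous_snd)
    · exact isClosed_le continuous_const (continuous_fst.dist continuous_snd)
  let D : ℕ → ℕ → Set K := fun i k => W i k \ ⋃ m, Prod.fst '' Z i k m
  have hD : ∀ i k, MeasurableSet (D i k) := fun i k =>
    (hW i k).measurableSet.diff (MeasurableSet.iUnion fun m =>
      ((hZ i k m).image continuous_fst).measurableSet)
  have hDinj : ∀ i k, Set.InjOn f (D i k) := by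
    intro i k x hx y hy hxy
    by_contra hne
    obtain ⟨m, hm⟩ := exists_nat_one_div_lt (dist_pos.2 hne)
    exact hx.2 (Set.mem_iUnion.2 ⟨m, (x, y), ⟨⟨hx.1, hy.1⟩, hxy, hm.le⟩, rfl⟩)
  let D' : ℕ → Set K := fun n => D n.unpair.1 n.unpair.2
  refine ⟨disjointed D', MeasurableSet.disjointed fun n => hD _ _, disjoint_disjointed D', ?_,
    fun i => (hDinj _ _).mono (disjointed_subset D' i)⟩
  rw [iUnion_disjointed]
  apply Set.Subset.antisymm
  · exact Set.iUnion_subset fun n x hx => hx.1.1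
  · intro y hy
    have hfin' : ({x ∈ A | f x = f y} \ {y}).Finite := (hfin y hy).subset Set.sdiff_subset
    have hopen : ({x ∈ A | f x = f y} \ {y})ᶜ ∈ 𝓝 y :=
      hfin'.isClosed.isOpen_compl.mem_nhds (by simp)
    obtain ⟨ε, hε, hball⟩ := Metric.mem_nhds_iff.1 hopen
    obtain ⟨k, hk⟩ := exists_nat_one_div_lt (half_pos hε)
    have hkpos : (0 : ℝ) < 1 / ((k : ℝ) + 1) := by positivity
    obtain ⟨i, hi⟩ : ∃ i, dist y (TopologicalSpace.denseSeq K i) < 1 / ((k : ℝ) + 1) := by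
      obtain ⟨z, hz, i, rfl⟩ := (TopologicalSpace.denseRange_denseSeq K).exists_dist_lt y hkpos |>.elim
        fun i hi => (⟨_, hi, i, rfl⟩ : ∃ z, dist y z < 1 / ((k : ℝ) + 1) ∧ ∃ i, TopologicalSpace.denseSeq K i = z)
      exact ⟨i, hz⟩
    refine Set.mem_iUnion.2 ⟨Nat.pair i k, ?_⟩
    simp only [D', Nat.unpair_pair]
    refine ⟨⟨hy, hi.le⟩, ?_⟩
    intro hmem
    obtain ⟨m, ⟨y1, y2⟩, ⟨⟨h1, h2⟩, h3, h4⟩, h5⟩ := Set.mem_iUnion.1 hmem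
    simp only at h1 h2 h3 h4 h5
    subst h5
    have hmpos : (0 : ℝ) < 1 / ((m : ℝ) + 1) := by positivity
    have hd1 : dist y2 y1 < ε := by
      have := dist_triangle_right y2 y1 (TopologicalSpace.denseSeq K i)
      have h2' : dist y2 (TopologicalSpace.denseSeq K i) ≤ 1 / ((k : ℝ) + 1) := h2.2
      linarith
    refine hball (mem_ball.2 hd1) ⟨⟨h2.1, h3.symm⟩, ?_⟩
    intro h
    have h' : y2 = y1 := h
    rw [h', dist_self] at h4
    linarith

/-- Counting function of the fibres. -/
lemma exists_count {K : Type*} [MetricSpace K] [CompactSpace K] [MeasurableSpace K]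
    [BorelSpace K] (f : K → K) (hf : Continuous f) (ν : Measure K) (c : ℝ≥0∞)
    (hjac : ∀ A : Set K, MeasurableSet A → Set.InjOn f A → c * ν A = ν (f '' A))
    (A : Set K) (hA : IsCompact A)
    (hfin : ∀ y ∈ A, {x ∈ A | f x = f y}.Finite) :
    ∃ h : K → ℝ≥0∞, Measurable h ∧ ∫⁻ x, h x ∂ν = c * ν A ∧
      ∀ x, h x ≤ (({y ∈ A | f y = x}.ncard : ℕ) : ℝ≥0∞) := by
  classical
  obtain ⟨E, hEm, hEd, hEu, hEi⟩ := exists_inj_pieces f hf A hA hfin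
  have hm : ∀ i, MeasurableSet (f '' E i) := fun i =>
    (hEm i).image_of_continuousOn_injOn hf.continuousOn (hEi i)
  refine ⟨fun x => ∑' i, (f '' E i).indicator 1 x, ?_, ?_, ?_⟩
  · exact Measurable.ennreal_tsum fun i => measurable_one.indicator (hm i)
  · rw [lintegral_tsum fun i => (measurable_one.indicator (hm i)).aemeasurable]
    simp only [lintegral_indicator_one (hm _)]
    rw [← hEu, measure_iUnion hEd hEm, ← ENNReal.tsum_mul_left]
    exact tsum_congr fun i => (hjac _ (hEm i) (hEi i)).symm
  · intro x
    have hfx : {y ∈ A | f y = x}.Finite := by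
      rcases Set.eq_empty_or_nonempty {y ∈ A | f y = x} with h | ⟨y, hy, rfl⟩
      · rw [h]; exact Set.finite_empty
      · exact hfin y hy
    beta_reduce
    rw [ENNReal.tsum_eq_iSup_sum]
    refine iSup_le fun s => ?_
    simp only [Set.indicator_apply, Pi.one_apply, Finset.sum_boole]
    rw [Nat.cast_le, ← Set.ncard_coe_finset]
    have hch : ∀ i, ∃ y, x ∈ f '' E i → y ∈ E i ∧ f y = x := by
      intro i
      by_cases hx : x ∈ f '' E i
      · obtain ⟨y, hy⟩ := hx; exact ⟨y, fun _ => hy⟩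
      · exact ⟨x, fun h => absurd h hx⟩
    choose g hg using hch
    refine Set.ncard_le_ncard_of_injOn g ?_ ?_ hfx
    · intro i hi
      simp only [Finset.coe_filter, Set.mem_setOf_eq] at hi
      refine ⟨?_, (hg i hi.2).2⟩
      rw [← hEu]
      exact Set.mem_iUnion.2 ⟨i, (hg i hi.2).1⟩
    · intro i hi j hj hij
      simp only [Finset.coe_filter, Set.mem_setOf_eq] at hi hj
      by_contra hne
      have h1 := (hg i hi.2).1
      have h2 := (hg j hj.2).1
      rw [← hij] at h2
      exact Set.disjoint_left.1 (hEd hne) h1 h2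

lemma measurableSet_histories {K : Type*} [MetricSpace K] [CompactSpace K] [MeasurableSpace K]
    [BorelSpace K] (F : K → K) (hF : Continuous F) (L : Set K) (hL : MeasurableSet L) :
    MeasurableSet (histories F L) := by
  have : histories F L = (⋂ j, (fun x : ℕ → K => x j) ⁻¹' L) ∩
      ⋂ j, {x : ℕ → K | F (x (j + 1)) = x j} := by
    ext x; simp [histories]
  rw [this]
  refine (MeasurableSet.iInter fun j => measurable_pi_apply j hL).inter
    (MeasurableSet.iInter fun j => ?_)
  exact measurableSet_eq_fun (hF.measurable.comp (measurable_pi_apply _)) (measurable_pi_apply _)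

lemma histShift_measurable {K : Type*} [MeasurableSpace K] (F : K → K) (hF : Measurable F) :
    Measurable (histShift F) := by
  refine measurable_pi_lambda _ fun j => ?_
  cases j with
  | zero => exact hF.comp (measurable_pi_apply 0)
  | succ j => exact measurable_pi_apply j

lemma histShift_iterate_apply {K : Type*} (F : K → K) (n : ℕ) :
    ∀ x : ℕ → K, (histShift F)^[n] x n = x 0 := by
  induction n with
  | zero => intro x; rfl
  | succ n ih =>
    intro x
    rw [Function.iterate_succ_apply']
    exact ih x

lemma hist_iterate {K : Type*} (F : K → K) (L : Set K) (x : ℕ → K) (hx : x ∈ histories F L)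
    (n : ℕ) : F^[n] (x n) = x 0 := by
  induction n with
  | zero => rfl
  | succ n ih => rw [Function.iterate_succ_apply, hx.2 n, ih]

/-- A contracting inverse branch has a repelling fixed point. -/
lemma exists_repelling {K : Type*} [MetricSpace K] [CompactSpace K] (F : K → K) (n : ℕ)
    (T U : Set K) (hT : IsClosed T) (hU : IsOpen U) (hTU : T ⊆ U) (hTne : T.Nonempty)
    (H : K → K) (hinv : ∀ y ∈ U, F^[n] (H y) = y) (hmaps : Set.MapsTo H T T)
    (c : ℝ≥0) (hc : c < 1) (hlip : LipschitzOnWith c H U) :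
    ∃ p ∈ T, H p = p ∧ IsRepellingPeriodicPt F n p := by
  obtain ⟨x, hx⟩ := hTne
  have hcon : ContractingWith c (Set.MapsTo.restrict H T T hmaps) :=
    ⟨hc, (hlip.mono hTU).mapsToRestrict hmaps⟩
  obtain ⟨p, hp, hfix, -⟩ := ContractingWith.exists_fixedPoint' hT.isComplete hmaps hcon hx
    (edist_ne_top _ _)
  have hfix' : H p = p := hfix
  refine ⟨p, hp, hfix', ?_, ?_⟩
  · have := hinv p (hTU hp)
    rwa [hfix'] at this
  · obtain ⟨r, hr, hb⟩ := Metric.isOpen_iff.1 hU p (hTU hp)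
    exact ⟨r, hr, c, hc, H, fun y hy => hinv y (hb hy), hfix', hlip.mono hb⟩

/-- with `L̂_N := {x̂ ∈ L̂ : η(x̂) > 1/N, l(x̂) ≤ N}` and
`ν_N := (π₀)_*(1_{L̂_N} ν̂)`, for every `â ∈ L̂_N` and every closed
`C ⊆ B(â₀, 1/(2N))`, any weak-* limit `σ̃` of `σ_n := d^{-n} ∑_{p ∈ R_n} δ_p`
satisfies `σ̃(C) ≥ ν_N(C)`. -/
theorem weak_limit_dominates_nuN_on_small_closed_sets
    {K : Type*} [MetricSpace K] [CompactSpace K] [MeasurableSpace K] [BorelSpace K]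
    (F : K → K) (hFcont : Continuous F)
    (d : ℕ) (hd : 2 ≤ d)
    (R : ℕ → Finset K)
    (hR : ∀ n, 1 ≤ n → ∀ x : K, x ∈ R n ↔ IsRepellingPeriodicPt F n x)
    (hRcard : Filter.limsup (fun n => ((R n).card : ℝ) / (d : ℝ) ^ n) atTop ≤ 1)
    (ν : Measure K) [IsProbabilityMeasure ν]
    (hinv : Measure.map F ν = ν)
    (hmix : ∀ A B : Set K, MeasurableSet A → MeasurableSet B →
      Tendsto (fun n => ν (A ∩ F^[n] ⁻¹' B)) atTop (𝓝 (ν A * ν B)))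
    (hjac : ∀ A : Set K, MeasurableSet A → Set.InjOn F A → MeasurableSet (F '' A) →
      (d : ℝ≥0∞) * ν A = ν (F '' A))
    (L : Set K) (hLmeas : MeasurableSet L) (hLfull : ν L = 1)
    (hLinv : F '' L = L)
    (hLdeg : ∀ y ∈ L, Set.ncard {x ∈ L | F x = y} = d)
    (νh : Measure (ℕ → K)) [IsProbabilityMeasure νh]
    (hhist : νh (histories F L) = 1)
    (hshiftinv : Measure.map (histShift F) νh = νh)
    (hmixh : ∀ A B : Set (ℕ → K), MeasurableSet A → MeasurableSet B →
      Tendsto (fun n => νh (A ∩ (histShift F)^[n] ⁻¹' B)) atTop (𝓝 (νh A * νh B)))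
    (hproj : ∀ j : ℕ, Measure.map (fun x : ℕ → K => x j) νh = ν)
    (η lip : (ℕ → K) → ℝ) (hηmeas : Measurable η) (hlipmeas : Measurable lip)
    (hηpos : ∀ xh ∈ histories F L, 0 < η xh)
    (hlip1 : ∀ xh ∈ histories F L, 1 ≤ lip xh)
    (Λ : ℝ) (hΛ : 0 < Λ)
    (G : (ℕ → K) → ℕ → K → K)
    -- (P1): `G xh n` is an inverse branch of `F^[n]` on `B(x₀, η(x̂))` sending `x₀` to
    -- `x₋ₙ`, with Lipschitz constant at most `l(x̂) e^{-nΛ}`.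
    (hGinv : ∀ xh ∈ histories F L, ∀ n : ℕ, ∀ y ∈ ball (xh 0) (η xh),
      F^[n] (G xh n y) = y)
    (hGpt : ∀ xh ∈ histories F L, ∀ n : ℕ, G xh n (xh 0) = xh n)
    (hGlip : ∀ xh ∈ histories F L, ∀ n : ℕ, ∀ y ∈ ball (xh 0) (η xh),
      ∀ z ∈ ball (xh 0) (η xh),
      dist (G xh n y) (G xh n z) ≤ lip xh * Real.exp (-(n : ℝ) * Λ) * dist y z)
    -- (P2): for closed `C ⊆ B(x₀, 1/N)`, the sets `G x̂ n '' C` over histories with zeroth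
    -- coordinate `x₀` and `η(x̂) > 1/N` are pairwise equal or disjoint for `n` large.
    (hP2 : ∀ x₀ ∈ L, ∀ N : ℕ, 1 ≤ N → ∀ C : Set K, IsClosed C →
      C ⊆ ball x₀ (1 / (N : ℝ)) →
      ∃ n₀ : ℕ, ∀ n, n₀ ≤ n → ∀ xh ∈ histories F L, ∀ yh ∈ histories F L,
        xh 0 = x₀ → yh 0 = x₀ → 1 / (N : ℝ) < η xh → 1 / (N : ℝ) < η yh →
        G xh n '' C = G yh n '' C ∨ Disjoint (G xh n '' C) (G yh n '' C))
    (N : ℕ) (hN : 1 ≤ N) :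
    ∀ ah ∈ {xh ∈ histories F L | 1 / (N : ℝ) < η xh ∧ lip xh ≤ (N : ℝ)},
      ∀ C : Set K, IsClosed C → C ⊆ ball (ah 0) (1 / (2 * (N : ℝ))) →
      ∀ σt : Measure K, IsFiniteMeasure σt →
        (∃ φ : ℕ → ℕ, StrictMono φ ∧ ∀ f : K → ℝ, Continuous f →
          Tendsto (fun j => (∑ p ∈ R (φ j), f p) / (d : ℝ) ^ (φ j)) atTop
            (𝓝 (∫ x, f x ∂σt))) →
        Measure.map (fun x : ℕ → K => x 0)
            (νh.restrict {xh ∈ histories F L | 1 / (N : ℝ) < η xh ∧ lip xh ≤ (N : ℝ)}) C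
          ≤ σt C := by
  classical
  intro ah hah C hC hCsub σt hσt hex
  obtain ⟨φ, hφ, hlim⟩ := hex
  have hNpos : (0 : ℝ) < N := by exact_mod_cast hN
  set S : Set (ℕ → K) := {xh ∈ histories F L | 1 / (N : ℝ) < η xh ∧ lip xh ≤ (N : ℝ)} with hS
  have hSm : MeasurableSet S := by
    have : S = histories F L ∩ ({xh | 1 / (N : ℝ) < η xh} ∩ {xh | lip xh ≤ (N : ℝ)}) := rfl
    rw [this]
    exact (measurableSet_histories F hFcont L hLmeas).inter
      ((measurableSet_lt measurable_const hηmeas).inter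
        (measurableSet_le hlipmeas measurable_const))
  have hCm : MeasurableSet C := hC.measurableSet
  have hpim : ∀ j : ℕ, Measurable (fun x : ℕ → K => x j) := fun j => measurable_pi_apply j
  have hpiC : ∀ j : ℕ, ∀ B : Set K, MeasurableSet B →
      νh ((fun x : ℕ → K => x j) ⁻¹' B) = ν B := by
    intro j B hB
    rw [← hproj j, Measure.map_apply (hpim j) hB]
  rw [Measure.map_apply (hpim 0) hCm, Measure.restrict_apply (hpim 0 hCm)]
  set P : Set (ℕ → K) := (fun x : ℕ → K => x 0) ⁻¹' C ∩ S with hP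
  have hPm : MeasurableSet P := (hpim 0 hCm).inter hSm
  by_cases hν0 : ν C = 0
  · have : νh P ≤ ν C := (measure_mono Set.inter_subset_left).trans (hpiC 0 C hCm).le
    rw [hν0] at this
    exact this.trans zero_le
  have hshm : Measurable (histShift F) := histShift_measurable F hFcont.measurable
  -- mixing
  have hmixP : Tendsto (fun n => νh (P ∩ (fun x : ℕ → K => x n) ⁻¹' C)) atTop
      (𝓝 (νh P * ν C)) := by
    have h1 := hmixh _ P (hpim 0 hCm) hPm
    rw [hpiC 0 C hCm, mul_comm] at h1
    refine h1.congr fun n => ?_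
    have hmp : MeasurePreserving (histShift F)^[n] νh νh :=
      MeasurePreserving.iterate ⟨hshm, hshiftinv⟩ n
    rw [← hmp.measure_preimage (hPm.inter (hpim n hCm)).nullMeasurableSet]
    congr 1
    ext x
    simp only [Set.mem_inter_iff, Set.mem_preimage, histShift_iterate_apply]
    tauto
  -- the counting estimate
  have hcount : ∀ δ : ℝ, 0 < δ → cthickening δ C ⊆ ball (ah 0) (1 / (2 * (N : ℝ))) →
      ∀ x ∈ C, x ∈ L → ∀ᶠ n in atTop, ∀ B : Set K,
        (∀ y ∈ B, ∃ xh ∈ S, xh 0 = x ∧ xh n = y ∧ y ∈ C) →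
        B.ncard ≤ ((R n).filter (· ∈ cthickening δ C)).card := by
    intro δ hδ hTU x hxC hxL
    set T := cthickening δ C with hT
    have hTc : IsClosed T := isClosed_cthickening
    have hCT : C ⊆ T := self_subset_cthickening C
    have hUx : ball (ah 0) (1 / (2 * (N : ℝ))) ⊆ ball x (1 / (N : ℝ)) := by
      intro y hy
      have h1 := mem_ball.1 hy
      have h2 := mem_ball.1 (hCsub hxC)
      have h3 := dist_triangle_right y x (ah 0)
      have h4 : 1 / (2 * (N : ℝ)) + 1 / (2 * (N : ℝ)) = 1 / (N : ℝ) := by field_simp; norm_num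
      rw [mem_ball]; linarith
    obtain ⟨n₀, hn₀⟩ := hP2 x hxL N hN T hTc (hTU.trans hUx)
    have hexp : Tendsto (fun n : ℕ => Real.exp (-(n : ℝ) * Λ)) atTop (𝓝 0) := by
      refine Real.tendsto_exp_atBot.comp ?_
      have : Tendsto (fun n : ℕ => (n : ℝ) * Λ) atTop atTop :=
        tendsto_natCast_atTop_atTop.atTop_mul_const hΛ
      simpa [neg_mul] using this
    have hexpN : Tendsto (fun n : ℕ => (N : ℝ) * Real.exp (-(n : ℝ) * Λ)) atTop (𝓝 0) := by
      simpa using hexp.const_mul (N : ℝ)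
    filter_upwards [eventually_ge_atTop n₀, eventually_ge_atTop 1,
      hexp.eventually_lt_const hδ, hexpN.eventually_lt_const one_pos] with n hnn₀ hn1 hnδ hnc B hB
    have key : ∀ y ∈ B, ∃ xh ∈ S, xh 0 = x ∧ xh n = y ∧ ∃ p ∈ T, G xh n p = p ∧ p ∈ R n := by
      intro y hy
      obtain ⟨xh, hxS, hx0, hxn, hyC⟩ := hB y hy
      have hxH : xh ∈ histories F L := hxS.1
      have hUη : ball (ah 0) (1 / (2 * (N : ℝ))) ⊆ ball (xh 0) (η xh) := by
        rw [hx0]; exact hUx.trans (ball_subset_ball hxS.2.1.le)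
      have hlipb : ∀ u ∈ ball (xh 0) (η xh), ∀ v ∈ ball (xh 0) (η xh),
          dist (G xh n u) (G xh n v) ≤ N * Real.exp (-(n : ℝ) * Λ) * dist u v := by
        intro u hu v hv
        refine (hGlip xh hxH n u hu v hv).trans ?_
        have := hxS.2.2
        gcongr
      have hmaps : Set.MapsTo (G xh n) T T := by
        intro u hu
        refine mem_cthickening_of_dist_le _ y _ _ hyC ?_
        have hself : xh 0 ∈ ball (xh 0) (η xh) := mem_ball_self (hηpos xh hxH)
        have h1 := hlipb u (hUη (hTU hu)) (xh 0) hself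
        rw [hGpt xh hxH n, hxn] at h1
        have h2 : dist u (xh 0) ≤ 1 / (N : ℝ) := by
          rw [hx0]; exact (mem_ball.1 (hUx (hTU hu))).le
        calc _ ≤ _ := h1
          _ ≤ N * Real.exp (-(n : ℝ) * Λ) * (1 / (N : ℝ)) := by gcongr
          _ = Real.exp (-(n : ℝ) * Λ) := by field_simp
          _ ≤ δ := hnδ.le
      have hnn : 0 ≤ (N : ℝ) * Real.exp (-(n : ℝ) * Λ) := by positivity
      obtain ⟨p, hpT, hpfix, hprep⟩ := exists_repelling F n T _ hTc isOpen_ball hTU ⟨x, hCT hxC⟩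
        (G xh n) (fun u hu => hGinv xh hxH n u (hUη hu)) hmaps ⟨_, hnn⟩ hnc
        (LipschitzOnWith.of_dist_le_mul fun u hu v hv => hlipb u (hUη hu) v (hUη hv))
      exact ⟨xh, hxS, hx0, hxn, p, hpT, hpfix, (hR n hn1 p).2 hprep⟩
    have key' : ∀ y, ∃ xh : ℕ → K, ∃ p : K, y ∈ B → xh ∈ S ∧ xh 0 = x ∧ xh n = y ∧ p ∈ T ∧
        G xh n p = p ∧ p ∈ R n := by
      intro y
      by_cases hy : y ∈ B
      · obtain ⟨xh, h1, h2, h3, p, h4, h5, h6⟩ := key y hy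
        exact ⟨xh, p, fun _ => ⟨h1, h2, h3, h4, h5, h6⟩⟩
      · exact ⟨fun _ => y, y, fun h => absurd h hy⟩
    choose X p hXp using key'
    rw [← Set.ncard_coe_finset]
    refine Set.ncard_le_ncard_of_injOn p ?_ ?_ (Finset.finite_toSet _)
    · intro y hy
      obtain ⟨-, -, -, h4, -, h6⟩ := hXp y hy
      rw [Finset.mem_coe, Finset.mem_filter]
      exact ⟨h6, h4⟩
    · intro y hy z hz hyz
      obtain ⟨hy1, hy2, hy3, hy4, hy5, -⟩ := hXp y hy
      obtain ⟨hz1, hz2, hz3, hz4, hz5, -⟩ := hXp z hz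
      have hxT : x ∈ T := hCT hxC
      rcases hn₀ n hnn₀ (X y) hy1.1 (X z) hz1.1 hy2 hz2 hy1.2.1 hz1.2.1 with heq | hdis
      · have hmem : y ∈ G (X y) n '' T :=
          ⟨x, hxT, by rw [← hy2, hGpt _ hy1.1 n, hy3]⟩
        rw [heq] at hmem
        obtain ⟨t, htT, hty⟩ := hmem
        have h1 : F^[n] (G (X z) n t) = t := by
          refine hGinv _ hz1.1 n t ?_
          rw [hz2]
          exact ball_subset_ball hz1.2.1.le (hUx (hTU htT))
        have h2 : F^[n] y = x := by
          rw [← hy3, hist_iterate F L _ hy1.1 n, hy2]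
        rw [hty, h2] at h1
        rw [← hty, ← h1, ← hz2, hGpt _ hz1.1 n, hz3]
      · exfalso
        refine Set.disjoint_left.1 hdis ⟨p y, hy4, hy5⟩ ?_
        rw [hyz]
        exact ⟨p z, hz4, hz5⟩
  -- compact sets and counting functions
  have hQ : ∀ n : ℕ, ∃ Q ⊆ P ∩ (fun x : ℕ → K => x n) ⁻¹' C, IsCompact Q ∧
      νh (P ∩ (fun x : ℕ → K => x n) ⁻¹' C) < νh Q + ((n : ℝ≥0∞) + 1)⁻¹ := by
    intro n
    refine (hPm.inter (hpim n hCm)).exists_isCompact_lt_add (measure_ne_top _ _) ?_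
    exact ENNReal.inv_ne_zero.2 (by finiteness)
  choose Q hQsub hQc hQm using hQ
  let A : ℕ → Set K := fun n => (fun x : ℕ → K => x n) '' Q n
  have hAc : ∀ n, IsCompact (A n) := fun n => (hQc n).image (continuous_apply n)
  have hAsub : ∀ n, A n ⊆ L := by
    rintro n _ ⟨xh, hx, rfl⟩
    exact (hQsub n hx).1.2.1.1 n
  have hAF : ∀ n, ∀ y ∈ A n, ∃ xh ∈ S, xh 0 = F^[n] y ∧ xh n = y ∧ y ∈ C ∧ xh 0 ∈ C ∧
      xh 0 ∈ L := by
    rintro n _ ⟨xh, hx, rfl⟩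
    have h := hQsub n hx
    exact ⟨xh, h.1.2, (hist_iterate F L xh h.1.2.1 n).symm, rfl, h.2, h.1.1, h.1.2.1.1 0⟩
  have hfibL := fibre_bound F d hd L hLinv hLdeg
  have hcnt : ∀ n, ∃ h : K → ℝ≥0∞, Measurable h ∧ ∫⁻ x, h x ∂ν = (d : ℝ≥0∞) ^ n * ν (A n) ∧
      ∀ x, h x ≤ (({y ∈ A n | F^[n] y = x}.ncard : ℕ) : ℝ≥0∞) := by
    intro n
    refine exists_count F^[n] (hFcont.iterate n) ν _ (jac_iterate F hFcont d ν hjac n) (A n)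
      (hAc n) ?_
    intro y hy
    obtain ⟨xh, -, h0, -, -, -, hL⟩ := hAF n y hy
    rw [h0] at hL
    exact (hfibL n _ hL).1.subset fun z hz => ⟨hAsub n hz.1, hz.2⟩
  choose h hhm hhint hhle using hcnt
  have hdpos : ∀ n, (d : ℝ≥0∞) ^ n ≠ 0 := fun n => pow_ne_zero _ (by
    rw [Ne, Nat.cast_eq_zero]; omega)
  have hdtop : ∀ n, (d : ℝ≥0∞) ^ n ≠ ⊤ := fun n => by finiteness
  let k : ℕ → K → ℝ≥0∞ := fun n x => ((d : ℝ≥0∞) ^ n)⁻¹ * h n x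
  have hkm : ∀ n, Measurable (k n) := fun n => (hhm n).const_mul _
  have hkint : ∀ n, ∫⁻ x, k n x ∂ν = ν (A n) := by
    intro n
    rw [lintegral_const_mul _ (hhm n), hhint n, ← mul_assoc,
      ENNReal.inv_mul_cancel (hdpos n) (hdtop n), one_mul]
  have hAQ : ∀ n, νh (Q n) ≤ ν (A n) := by
    intro n
    rw [← hpiC n (A n) (hAc n).measurableSet]
    exact measure_mono fun x hx => ⟨x, hx, rfl⟩
  have hk0 : ∀ n x, ¬ (x ∈ C ∧ x ∈ L) → k n x = 0 := by
    intro n x hx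
    have he : {y ∈ A n | F^[n] y = x} = ∅ := by
      ext y
      simp only [Set.mem_setOf_eq, Set.mem_empty_iff_false, iff_false]
      rintro ⟨hy, hyx⟩
      obtain ⟨xh, -, h0, -, -, hc, hl⟩ := hAF n y hy
      rw [h0, hyx] at hc hl
      exact hx ⟨hc, hl⟩
    have := hhle n x
    rw [he, Set.ncard_empty, Nat.cast_zero] at this
    have h0 : h n x = 0 := le_antisymm this zero_le
    simp only [k, h0, mul_zero]
  have hkle : ∀ n x, k n x ≤ C.indicator 1 x := by
    intro n x
    by_cases hx : x ∈ C ∧ x ∈ L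
    · rw [Set.indicator_of_mem hx.1, Pi.one_apply]
      have h1 : {y ∈ A n | F^[n] y = x}.ncard ≤ d ^ n :=
        (Set.ncard_le_ncard (t := {y ∈ L | F^[n] y = x})
          (fun z hz => ⟨hAsub n hz.1, hz.2⟩) (hfibL n x hx.2).1).trans
          (hfibL n x hx.2).2
      have h2 : h n x ≤ (d : ℝ≥0∞) ^ n := (hhle n x).trans (by exact_mod_cast h1)
      calc k n x ≤ ((d : ℝ≥0∞) ^ n)⁻¹ * (d : ℝ≥0∞) ^ n := mul_le_mul_right h2 _
        _ = 1 := ENNReal.inv_mul_cancel (hdpos n) (hdtop n)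
    · rw [hk0 n x hx]; exact zero_le
  -- the claim at scale δ
  have hclaim : ∀ δ : ℝ, 0 < δ → cthickening δ C ⊆ ball (ah 0) (1 / (2 * (N : ℝ))) →
      νh P ≤ σt (cthickening (2 * δ) C) := by
    intro δ hδ hTU
    set T := cthickening δ C with hT
    let g : K → ℝ := fun x => (thickenedIndicator hδ T x : ℝ)
    have hgc : Continuous g := NNReal.continuous_coe.comp (thickenedIndicator hδ T).continuous
    have hg0 : ∀ x, 0 ≤ g x := fun x => NNReal.coe_nonneg _
    have hg1 : ∀ x ∈ T, g x = 1 := fun x hx => by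
      simp only [g, thickenedIndicator_one hδ T hx, NNReal.coe_one]
    have hgl := hlim g hgc
    have hI : ENNReal.ofReal (∫ x, g x ∂σt) ≤ σt (cthickening (2 * δ) C) := by
      have hgi : Integrable g σt :=
        hgc.integrable_of_hasCompactSupport (HasCompactSupport.of_compactSpace g)
      rw [ofReal_integral_eq_lintegral_ofReal hgi (ae_of_all _ hg0),
        ← lintegral_indicator_one isClosed_cthickening.measurableSet]
      refine lintegral_mono fun x => ?_
      by_cases hx : x ∈ cthickening (2 * δ) C
      · rw [Set.indicator_of_mem hx, Pi.one_apply]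
        refine ENNReal.ofReal_le_one.2 ?_
        exact_mod_cast thickenedIndicator_le_one hδ T x
      · have hx' : x ∉ thickening δ T := by
          intro hx'
          apply hx
          rw [two_mul]
          exact thickening_subset_cthickening _ _
            (thickening_cthickening_subset δ hδ.le C hx')
        simp only [g, thickenedIndicator_zero hδ T hx', NNReal.coe_zero, ENNReal.ofReal_zero]
        exact zero_le
    refine le_trans ?_ hI
    have hlimsup : ∀ x, limsup (fun j => k (φ j) x) atTop ≤
        C.indicator (fun _ => ENNReal.ofReal (∫ x, g x ∂σt)) x := by
      intro x
      by_cases hx : x ∈ C ∧ x ∈ L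
      · rw [Set.indicator_of_mem hx.1]
        rw [← (ENNReal.tendsto_ofReal hgl).limsup_eq]
        refine limsup_le_limsup ?_
        filter_upwards [hφ.tendsto_atTop.eventually (hcount δ hδ hTU x hx.1 hx.2)] with j hj
        have h1 := hj {y ∈ A (φ j) | F^[φ j] y = x} (by
          rintro y ⟨hy, hyx⟩
          obtain ⟨xh, h1, h2, h3, h4, -⟩ := hAF _ y hy
          exact ⟨xh, h1, h2.trans hyx, h3, h4⟩)
        have h2 : ((((R (φ j)).filter (· ∈ T)).card : ℕ) : ℝ) ≤ ∑ p ∈ R (φ j), g p := by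
          rw [Finset.card_eq_sum_ones, Nat.cast_sum, Finset.sum_filter]
          refine Finset.sum_le_sum fun p _ => ?_
          split_ifs with hp
          · rw [hg1 p hp]; simp
          · exact hg0 p
        have hdr : (0 : ℝ) < (d : ℝ) ^ (φ j) := by
          have : (0 : ℝ) < d := by exact_mod_cast (by omega : 0 < d)
          positivity
        rw [ENNReal.ofReal_div_of_pos hdr, ENNReal.ofReal_pow (Nat.cast_nonneg d),
          ENNReal.ofReal_natCast, ENNReal.div_eq_inv_mul]
        refine mul_le_mul_right ((hhle _ x).trans ?_) _
        rw [← ENNReal.ofReal_natCast]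
        refine ENNReal.ofReal_le_ofReal (le_trans ?_ h2)
        exact_mod_cast h1
      · simp only [hk0 _ x hx]
        rw [limsup_const]
        exact zero_le
    have hrf := limsup_lintegral_le (μ := ν) (f := fun j => k (φ j)) (C.indicator 1)
      (fun j => hkm _) (fun j => ae_of_all _ fun x => hkle _ x) (by
        rw [lintegral_indicator_one hCm]; exact measure_ne_top _ _)
    have hup : ∫⁻ x, limsup (fun j => k (φ j) x) atTop ∂ν ≤
        ENNReal.ofReal (∫ x, g x ∂σt) * ν C := by
      refine (lintegral_mono hlimsup).trans ?_
      rw [lintegral_indicator_const hCm]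
    have heps : Tendsto (fun n : ℕ => ((n : ℝ≥0∞) + 1)⁻¹) atTop (𝓝 0) := by
      have := (tendsto_add_atTop_iff_nat 1).2 ENNReal.tendsto_inv_nat_nhds_zero
      simpa using this
    have hlow : Tendsto (fun n => νh (P ∩ (fun x : ℕ → K => x n) ⁻¹' C) -
        ((n : ℝ≥0∞) + 1)⁻¹) atTop (𝓝 (νh P * ν C)) := by
      have := ENNReal.Tendsto.sub hmixP heps (Or.inr ENNReal.zero_ne_top)
      simpa using this
    have hlow' := (hlow.comp hφ.tendsto_atTop).limsup_eq
    have hfinal : νh P * ν C ≤ ENNReal.ofReal (∫ x, g x ∂σt) * ν C := by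
      rw [← hlow']
      refine le_trans (limsup_le_limsup (Eventually.of_forall fun j => ?_)) (hrf.trans hup)
      simp only [Function.comp]
      rw [hkint]
      refine le_trans ?_ (hAQ _)
      rw [tsub_le_iff_right]
      exact (hQm _).le
    exact (ENNReal.mul_le_mul_iff_left hν0 (measure_ne_top _ _)).1 hfinal
  -- δ → 0
  obtain ⟨δ₀, hδ₀, hδ₀sub⟩ := hC.isCompact.exists_cthickening_subset_open isOpen_ball hCsub
  have ht := tendsto_measure_cthickening_of_isClosed (μ := σt) (s := C)
    ⟨1, one_pos, measure_ne_top _ _⟩ hC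
  have ht2 : Tendsto (fun δ : ℝ => σt (cthickening (2 * δ) C)) (𝓝[>] 0) (𝓝 (σt C)) := by
    refine ht.comp (tendsto_nhdsWithin_of_tendsto_nhds ?_)
    have : Continuous fun δ : ℝ => 2 * δ := by fun_prop
    simpa using this.tendsto 0
  refine ge_of_tendsto ht2 ?_
  filter_upwards [Ioo_mem_nhdsGT hδ₀] with δ hδ
  exact hclaim δ hδ.1 ((cthickening_mono hδ.2.le C).trans hδ₀sub)
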